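/- arXiv:1810.06201 — 3 statements merged into one kernel-verified Lean document; each statement's English description precedes it below -/
import Mathlib

section
/- Let G be a finite group, n ≥ 1, and σ a permutation of Fin n with exactly c orbits on Fin n (fixed points counted as orbits of size 1). Then the number of functions ξ : Fin n → G such that for every x ∈ Fin n the cycle product of ξ along the orbit of x equals the identity of G is exactly |G|^{n−c}. -/
/-- The cycle product of `ξ : Fin n → G` along the orbit of `x` under `σ`:
if `d ≥ 1` is the size of the orbit of `x` (the minimal period of `x` under `σ`),
this is `ξ(σ^{d-1} x) · ξ(σ^{d-2} x) ⋯ ξ(σ x) · ξ(x)`. -/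
noncomputable def cycleProd {G : Type*} [Group G] {n : ℕ} (σ : Equiv.Perm (Fin n))
    (ξ : Fin n → G) (x : Fin n) : G :=
  (((List.range (Function.minimalPeriod (⇑σ) x)).map (fun k => ξ ((σ ^ k) x))).reverse).prod

/-!
A function `ξ` has trivial cycle products exactly when it is a coboundary
`x ↦ g (σ x) * (g x)⁻¹`, and `g` is then determined by its values at one point of each orbit, where
these values may be prescribed arbitrarily. Prescribing the value `1` leaves one free element of `G`
for each of the remaining points. To recover `g` from `ξ`, iterate the skew product
`(x, h) ↦ (σ x, ξ x * h)`: its orbits trace out the graph of `g`, and trivial cycle products say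
that an orbit returns to its starting point whenever its first coordinate does.
-/

universe u v w

open Equiv Function

theorem semiconj_perm_zpow {α β : Type*} {f : α → β} {σ : Perm α} {τ : Perm β}
    (h : Semiconj f σ τ) (k : ℤ) : Semiconj f ⇑(σ ^ k) ⇑(τ ^ k) := by
  induction k with
  | zero => exact Semiconj.id_right
  | succ k ih => simpa only [zpow_add_one, Perm.coe_mul] using ih.comp_right h
  | pred k ih =>
    have h_inv : Semiconj f (σ⁻¹ : Perm α) (τ⁻¹ : Perm β) :=
      h.inverses_right σ.apply_symm_apply τ.symm_apply_apply
    simpa only [zpow_sub_one, Perm.coe_mul] using ih.comp_right h_inv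

theorem perm_pow_minimalPeriod {α : Type*} (σ : Perm α) (x : α) :
    (σ ^ minimalPeriod σ x) x = x := by
  rw [← Perm.iterate_eq_pow, iterate_minimalPeriod]

section

variable {α G : Type*} [Group G] (σ : Perm α)

/-- The cycle product of `ξ` along the orbit of `x`, on an arbitrary type; on `Fin n` it unfolds
to `cycleProd`. Along an infinite orbit the minimal period is `0` and the product is empty. -/
noncomputable def orbitProd (ξ : α → G) (x : α) : G :=
  (((List.range (minimalPeriod σ x)).map fun k => ξ ((σ ^ k) x)).reverse).prod

/-- The skew product of `σ` with left translations, `(x, h) ↦ (σ x, ξ x * h)`, whose powers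
accumulate the products of `ξ` along the orbits of `σ`. -/
def skewProduct (ξ : α → G) : Perm (α × G) :=
  σ.prodShear fun x => Equiv.mulLeft (ξ x)

/-- The coboundary of `g` with respect to `σ`: the functions of this form turn out to be those with
trivial cycle products. -/
def coboundary (g : α → G) (x : α) : G :=
  g (σ x) * (g x)⁻¹

variable {σ} {ξ : α → G}

@[simp]
theorem skewProduct_apply (p : α × G) : skewProduct σ ξ p = (σ p.1, ξ p.1 * p.2) := rfl

theorem fst_skewProduct_zpow (k : ℤ) (p : α × G) :
    ((skewProduct σ ξ ^ k) p).1 = (σ ^ k) p.1 :=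
  have fst_semiconj : Semiconj Prod.fst (skewProduct σ ξ) σ := fun _ => rfl
  semiconj_perm_zpow fst_semiconj k p

theorem skewProduct_pow_apply (k : ℕ) (x : α) (h : G) :
    (skewProduct σ ξ ^ k) (x, h) =
      ((σ ^ k) x, (((List.range k).map fun i => ξ ((σ ^ i) x)).reverse).prod * h) := by
  induction k with
  | zero => simp
  | succ k ih => simp [pow_succ', ih, List.range_succ, mul_assoc]

theorem skewProduct_pow_minimalPeriod (x : α) (h : G) :
    (skewProduct σ ξ ^ minimalPeriod σ x) (x, h) = (x, orbitProd σ ξ x * h) := by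
  rw [skewProduct_pow_apply, perm_pow_minimalPeriod, orbitProd]

theorem skewProduct_zpow_eq_self {x : α} (hξ : orbitProd σ ξ x = 1) {k : ℤ}
    (hk : (σ ^ k) x = x) (h : G) : (skewProduct σ ξ ^ k) (x, h) = (x, h) := by
  obtain ⟨m, rfl⟩ : (minimalPeriod σ x : ℤ) ∣ k :=
    MulAction.zpow_smul_eq_iff_minimalPeriod_dvd (a := σ).mp hk
  rw [zpow_mul, zpow_natCast]
  refine Perm.zpow_apply_eq_self_of_apply_eq_self ?_ m
  rw [skewProduct_pow_minimalPeriod, hξ, one_mul]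

theorem skewProduct_zpow_congr (hξ : ∀ x, orbitProd σ ξ x = 1) {j k : ℤ} {x : α}
    (hjk : (σ ^ j) x = (σ ^ k) x) (h : G) :
    (skewProduct σ ξ ^ j) (x, h) = (skewProduct σ ξ ^ k) (x, h) := by
  have base_eq : ((skewProduct σ ξ ^ k) (x, h)).1 = (σ ^ k) x := fst_skewProduct_zpow k (x, h)
  have base_fixed : (σ ^ (j - k)) ((skewProduct σ ξ ^ k) (x, h)).1 =
      ((skewProduct σ ξ ^ k) (x, h)).1 := by
    rw [base_eq, ← Perm.mul_apply, ← zpow_add, sub_add_cancel, hjk]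
  calc (skewProduct σ ξ ^ j) (x, h)
      = (skewProduct σ ξ ^ (j - k)) ((skewProduct σ ξ ^ k) (x, h)) := by
        rw [← Perm.mul_apply, ← zpow_add, sub_add_cancel]
    _ = (skewProduct σ ξ ^ k) (x, h) := skewProduct_zpow_eq_self (hξ _) base_fixed _

theorem skewProduct_coboundary_zpow (g : α → G) (k : ℤ) (x : α) :
    (skewProduct σ (coboundary σ g) ^ k) (x, g x) = ((σ ^ k) x, g ((σ ^ k) x)) := by
  have graph_invariant :
      Semiconj (fun x => (x, g x)) σ (skewProduct σ (coboundary σ g)) := fun x => by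
    simp [coboundary]
  exact (semiconj_perm_zpow graph_invariant k x).symm

theorem orbitProd_coboundary (g : α → G) (x : α) : orbitProd σ (coboundary σ g) x = 1 := by
  have graph_orbit := skewProduct_coboundary_zpow (σ := σ) g (minimalPeriod σ x) x
  rw [zpow_natCast, zpow_natCast, skewProduct_pow_minimalPeriod,
    perm_pow_minimalPeriod] at graph_orbit
  exact mul_eq_right.mp (congrArg Prod.snd graph_orbit)

theorem eq_of_coboundary_eq_of_sameCycle {g g' : α → G}
    (h : coboundary σ g = coboundary σ g') {r x : α} (hr : g r = g' r)
    (hrx : σ.SameCycle r x) : g x = g' x := by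
  obtain ⟨k, rfl⟩ := hrx
  have graph_orbit := skewProduct_coboundary_zpow (σ := σ) g k r
  rw [h, hr, skewProduct_coboundary_zpow] at graph_orbit
  exact (congrArg Prod.snd graph_orbit).symm

theorem sameCycle_out_mk (x : α) :
    σ.SameCycle (Quotient.mk (Perm.SameCycle.setoid σ) x).out x :=
  Quotient.mk_out (s := Perm.SameCycle.setoid σ) x

theorem exists_coboundary_eq (hξ : ∀ x, orbitProd σ ξ x = 1)
    (b : Quotient (Perm.SameCycle.setoid σ) → G) :
    ∃ g : α → G, (∀ q, g q.out = b q) ∧ coboundary σ g = ξ := by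
  let orbit (q : Quotient (Perm.SameCycle.setoid σ)) (k : ℤ) : α × G :=
    (skewProduct σ ξ ^ k) (q.out, b q)
  choose k hk using sameCycle_out_mk (σ := σ)
  let g (x : α) : G := (orbit ⟦x⟧ (k x)).2
  have orbit_eq_graph {q} {j : ℤ} {x : α} (hq : ⟦x⟧ = q) (hj : (σ ^ j) q.out = x) :
      orbit q j = (x, g x) := by
    subst hq
    have orbit_eq : orbit ⟦x⟧ j = orbit ⟦x⟧ (k x) :=
      skewProduct_zpow_congr hξ (hj.trans (hk x).symm) _
    rw [orbit_eq]
    exact Prod.ext ((fst_skewProduct_zpow (k x) _).trans (hk x)) rfl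
  refine ⟨g, fun q => ?_, funext fun x => ?_⟩
  · exact (congrArg Prod.snd (orbit_eq_graph (j := 0) q.out_eq rfl)).symm
  · have orbit_step : orbit ⟦x⟧ (1 + k x) = skewProduct σ ξ (orbit ⟦x⟧ (k x)) := by
      simp only [orbit, zpow_one_add, Perm.mul_apply]
    have class_apply : (⟦σ x⟧ : Quotient (Perm.SameCycle.setoid σ)) = ⟦x⟧ :=
      Quotient.sound (Perm.sameCycle_apply_left.mpr (Perm.SameCycle.refl σ x))
    have base_step : (σ ^ (1 + k x)) (Quotient.mk (Perm.SameCycle.setoid σ) x).out = σ x := by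
      rw [zpow_one_add, Perm.mul_apply, hk]
    rw [orbit_eq_graph class_apply base_step, orbit_eq_graph rfl (hk x)] at orbit_step
    exact mul_inv_eq_of_eq_mul (congrArg Prod.snd orbit_step)

variable (G σ) in
theorem bijective_coboundary :
    Bijective fun g : {g : α → G // ∀ q : Quotient (Perm.SameCycle.setoid σ), g q.out = 1} =>
      (⟨coboundary σ g, orbitProd_coboundary g.1⟩ : {ξ : α → G // ∀ x, orbitProd σ ξ x = 1}) := by
  constructor
  · intro g g' h
    refine Subtype.ext (funext fun x => ?_)
    exact eq_of_coboundary_eq_of_sameCycle (congrArg Subtype.val h)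
      ((g.2 _).trans (g'.2 _).symm) (sameCycle_out_mk x)
  · rintro ⟨ξ, hξ⟩
    obtain ⟨g, hg, rfl⟩ := exists_coboundary_eq hξ fun _ => 1
    exact ⟨⟨g, hg⟩, rfl⟩

end

open Cardinal

theorem mk_funs_eq_const_on_range {α : Type u} {ι : Type w} {G : Type v} [Finite α] {s : ι → α}
    (hs : Injective s) (a : G) :
    #{g : α → G // ∀ i, g (s i) = a} = lift.{u} #G ^ (Nat.card α - Nat.card ι) := by
  classical
  have eq_const_iff (g : α → G) :
      (∀ i, g (s i) = a) ↔ g ∘ ((↑) : {x // x ∈ Set.range s} → α) = fun _ => a := by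
    simp [funext_iff]
  have card_free : #{x // x ∉ Set.range s} = (Nat.card α - Nat.card ι : ℕ) := by
    rw [← Nat.cast_card, ← Nat.card_range_of_injective hs]
    exact congrArg Nat.cast (Set.ncard_compl (Set.range s))
  rw [mk_congr ((subtypeEquivRight eq_const_iff).trans (subtypePreimage _ _)), mk_arrow,
    card_free, lift_natCast, power_natCast]

theorem stmt5_general {α : Type u} [Finite α] (G : Type v) [Group G] (σ : Perm α) :
    #{ξ : α → G // ∀ x, orbitProd σ ξ x = 1} =
      lift.{u} #G ^ (Nat.card α - Nat.card (Quotient (Perm.SameCycle.setoid σ))) := by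
  rw [← mk_congr (Equiv.ofBijective _ (bijective_coboundary G σ)),
    mk_funs_eq_const_on_range Quotient.out_injective]

theorem cycleProd_eq_orbitProd {G : Type*} [Group G] {n : ℕ} (σ : Perm (Fin n))
    (ξ : Fin n → G) (x : Fin n) : cycleProd σ ξ x = orbitProd σ ξ x := rfl

/-- Let `G` be a finite group, `n ≥ 1`, and `σ` a permutation of `Fin n`
with exactly `c` orbits.  The number of `ξ : Fin n → G` such that all cycle products of
`ξ` along the orbits of `σ` are trivial is `|G| ^ (n - c)`. -/
theorem stmt5 (G : Type*) [Group G] [Fintype G] {n : ℕ} (hn : 1 ≤ n)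
    (σ : Equiv.Perm (Fin n)) (c : ℕ)
    (hc : c = Nat.card (Quotient (Equiv.Perm.SameCycle.setoid σ))) :
    Nat.card {ξ : Fin n → G // ∀ x : Fin n, cycleProd σ ξ x = 1} =
      Fintype.card G ^ (n - c) := by
  subst hc
  simpa [cycleProd_eq_orbitProd, Nat.card] using congrArg toNat (stmt5_general G σ)
end

section
/- Let F be a field, m ≥ 2 an integer, α_1, …, α_m ∈ F, and f₀(T) ∈ F[T] a polynomial of degree strictly greater than m. Let K = F(A_1, …, A_m) be the field of rational functions in m independent variables over F. Then the polynomial 𝓕(T) = f₀(T) + Σ_{i=1}^{m} A_i T^i + Σ_{i=1}^{m} A_i α_i ∈ K[T] is separable as a polynomial in T. -/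
/-!
Let `a = A₁`, `b = A₂`, and adjoin the other `Aₖ` to the base ring, so that the polynomial becomes
`p + a g + b h` with `g = T + α₁`, `h = T² + α₂` and `a, b` algebraically independent over a ring
`R` containing the coefficients of `p`, `g`, `h`. Suppose `t` is a double root.

* If `t` is algebraic over `R`, then `p(t) + b h(t) + a g(t) = 0` forces `g(t) = 0`, as `a` is
  transcendental over `R[b]`; likewise `g'(t) = 0`. This contradicts the separability of `g`.
* If `t` is transcendental over `R`, the Wronskian of `g` and `h` does not vanish at `t`. By
  Cramer's rule `a` and `b` lie in the fraction field of `R[t]`, of transcendence degree one.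
-/

open Polynomial

theorem enatCard_le_encard_of_isAlgebraic_adjoin {ι R A : Type*} [CommRing R] [CommRing A]
    [IsDomain A] [Algebra R A] {x : ι → A} (hx : AlgebraicIndependent R x) {S : Set A}
    (hS : ∀ i, IsAlgebraic (Algebra.adjoin R S) (x i)) : ENat.card ι ≤ S.encard := by
  have : FaithfulSMul R A := (faithfulSMul_iff_algebraMap_injective R A).2 hx.algebraMap_injective
  have : Nontrivial R := (algebraMap R A).domain_nontrivial
  let M := AlgebraicIndependent.matroid R A
  have range_subset : Set.range x ⊆ M.closure S := by
    rw [AlgebraicIndependent.matroid_closure_eq]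
    exact Set.range_subset_iff.2 hS
  have range_indep : M.Indep (Set.range x) := hx.coe_range
  calc
    ENat.card ι = (Set.range x).encard := by
      rw [← Set.image_univ, hx.injective.encard_image, Set.encard_univ]
    _ = M.eRk (Set.range x) := range_indep.eRk_eq_encard.symm
    _ ≤ M.eRk (M.closure S) := M.eRk_mono range_subset
    _ = M.eRk S := M.eRk_closure_eq S
    _ ≤ S.encard := M.eRk_le_encard S

theorem isAlgebraic_of_add_mul_eq_zero {R K : Type*} [CommRing R] [NoZeroDivisors R] [Field K]
    [Algebra R K] {x y a : K} (hx : IsAlgebraic R x) (hy : IsAlgebraic R y) (hy₀ : y ≠ 0)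
    (h : x + a * y = 0) : IsAlgebraic R a := by
  have ha : a = -x * y⁻¹ := by
    rw [eq_mul_inv_iff_mul_eq₀ hy₀]
    linear_combination h
  exact ha ▸ hx.neg.mul hy.inv

theorem wronskian_map {R S : Type*} [CommRing R] [CommRing S] (φ : R →+* S) (p q : R[X]) :
    wronskian (p.map φ) (q.map φ) = (wronskian p q).map φ := by
  simp only [wronskian, derivative_map, Polynomial.map_sub, Polynomial.map_mul]

theorem wronskian_X_add_C_X_sq_add_C_ne_zero {R : Type*} [CommRing R] [Nontrivial R] (α β : R) :
    wronskian (X + C α) (X ^ 2 + C β) ≠ 0 := by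
  have wronskian_eq : wronskian (X + C α) (X ^ 2 + C β) = X ^ 2 + 2 * C α * X - C β := by
    simp only [wronskian, derivative_add, derivative_X, derivative_X_sq, derivative_C, add_zero,
      map_ofNat]
    ring
  have coeff_two : (wronskian (X + C α) (X ^ 2 + C β)).coeff 2 = 1 := by
    simp [wronskian_eq, mul_assoc, coeff_ofNat_mul]
  exact fun h₀ ↦ by simp [h₀] at coeff_two

theorem aeval_wronskian_add_mul_eq_zero {R A : Type*} [CommRing R] [CommRing A] [Algebra R A]
    {p g h : R[X]} {a b t : A} (root : aeval t p + a * aeval t g + b * aeval t h = 0)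
    (root' : aeval t (derivative p) + a * aeval t (derivative g) +
      b * aeval t (derivative h) = 0) :
    aeval t (wronskian p h) + a * aeval t (wronskian g h) = 0 := by
  simp only [wronskian, map_sub, map_mul]
  linear_combination aeval t (derivative h) * root - aeval t h * root'

section DoubleRoot

variable {R K : Type*} [CommRing R] [Field K] [Algebra R K] {p g h : R[X]} {a b t : K}

theorem aeval_eq_zero_of_root_of_isAlgebraic (hab : AlgebraicIndependent R ![a, b])
    (ht : IsAlgebraic R t) (root : aeval t p + a * aeval t g + b * aeval t h = 0) :
    aeval t g = 0 := by
  have : NoZeroDivisors R := hab.algebraMap_injective.noZeroDivisors _ (map_zero _) (map_mul _)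
  let S := Algebra.adjoin R (![a, b] '' {1})
  have ha : Transcendental S a := hab.transcendental_adjoin (i := 0) (by simp)
  have hb : IsAlgebraic S b :=
    isAlgebraic_algebraMap (⟨b, Algebra.subset_adjoin ⟨1, rfl, rfl⟩⟩ : S)
  have algebraMap_inj : Function.Injective (algebraMap R S) :=
    .of_comp (f := algebraMap S K) hab.algebraMap_injective
  have aeval_alg (q : R[X]) : IsAlgebraic S (aeval t q) :=
    (Algebra.isAlgebraic_adjoin_singleton_iff.2 ht _
      (aeval_mem_adjoin_singleton R t)).extendScalars algebraMap_inj
  by_contra hg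
  exact ha <| isAlgebraic_of_add_mul_eq_zero ((aeval_alg p).add (hb.mul (aeval_alg h)))
    (aeval_alg g) hg (by linear_combination root)

theorem transcendental_of_root_of_separable (hab : AlgebraicIndependent R ![a, b])
    (hg : g.Separable) (root : aeval t p + a * aeval t g + b * aeval t h = 0)
    (root' : aeval t (derivative p) + a * aeval t (derivative g) +
      b * aeval t (derivative h) = 0) :
    Transcendental R t := fun ht ↦
  (aeval_ne_zero_of_isCoprime hg t).elim (· (aeval_eq_zero_of_root_of_isAlgebraic hab ht root))
    (· (aeval_eq_zero_of_root_of_isAlgebraic hab ht root'))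

theorem isAlgebraic_of_root_of_wronskian_ne_zero (hab : AlgebraicIndependent R ![a, b])
    (hgh : wronskian g h ≠ 0) (root : aeval t p + a * aeval t g + b * aeval t h = 0)
    (root' : aeval t (derivative p) + a * aeval t (derivative g) +
      b * aeval t (derivative h) = 0) :
    IsAlgebraic R t := by
  by_contra ht
  have aeval_alg (q : R[X]) : IsAlgebraic (Algebra.adjoin R {t}) (aeval t q) :=
    isAlgebraic_algebraMap (⟨_, aeval_mem_adjoin_singleton R t⟩ : Algebra.adjoin R {t})
  have wronskian_ne : aeval t (wronskian g h) ≠ 0 := fun h₀ ↦ ht ⟨_, hgh, h₀⟩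
  have ha : IsAlgebraic (Algebra.adjoin R {t}) a :=
    isAlgebraic_of_add_mul_eq_zero (aeval_alg _) (aeval_alg _) wronskian_ne
      (aeval_wronskian_add_mul_eq_zero root root')
  have hb : IsAlgebraic (Algebra.adjoin R {t}) b :=
    isAlgebraic_of_add_mul_eq_zero (aeval_alg (wronskian p g)) (aeval_alg (wronskian h g))
      (by rwa [← wronskian_neg_eq, map_neg, neg_ne_zero])
      (aeval_wronskian_add_mul_eq_zero (b := a) (by linear_combination root)
        (by linear_combination root'))
  have card_le := enatCard_le_encard_of_isAlgebraic_adjoin hab (Fin.forall_fin_two.2 ⟨ha, hb⟩)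
  simp at card_le

theorem separable_add_C_mul_add_C_mul (hab : AlgebraicIndependent R ![a, b]) (hg : g.Separable)
    (hgh : wronskian g h ≠ 0) :
    (p.map (algebraMap R K) + C a * g.map (algebraMap R K) +
      C b * h.map (algebraMap R K)).Separable := by
  let L := AlgebraicClosure K
  refine (isCoprime_iff_aeval_ne_zero_of_isAlgClosed K L _ _).2 fun t ↦ ?_
  by_contra! hroot
  obtain ⟨root, root'⟩ := hroot
  have hab' : AlgebraicIndependent R ![algebraMap K L a, algebraMap K L b] := by
    have h := hab.map' (f := IsScalarTower.toAlgHom R K L) (algebraMap K L).injective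
    rwa [← FinVec.map_eq] at h
  simp only [map_add, map_mul, derivative_mul, derivative_C, zero_mul, zero_add, derivative_map,
    aeval_map_algebraMap, aeval_C] at root root'
  exact transcendental_of_root_of_separable hab' hg root root'
    (isAlgebraic_of_root_of_wronskian_ne_zero hab' hgh root root')

end DoubleRoot

theorem separable_add_sum_C_mul {ι R K : Type*} [Fintype ι] [CommRing R] [Field K] [Algebra R K]
    {x : ι → K} (hx : AlgebraicIndependent R x) (f : R[X]) {g : ι → R[X]} {i j : ι} (hij : i ≠ j)
    (hg : (g i).Separable) (hgij : wronskian (g i) (g j) ≠ 0) :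
    (f.map (algebraMap R K) + ∑ k, C (x k) * (g k).map (algebraMap R K)).Separable := by
  classical
  let S := Algebra.adjoin R (x '' ({i, j} : Set ι)ᶜ)
  have algebraMap_inj : Function.Injective (algebraMap R S) :=
    .of_comp (f := algebraMap S K) hx.algebraMap_injective
  have map_map_S (q : R[X]) : (q.map (algebraMap R S)).map (algebraMap S K) =
      q.map (algebraMap R K) := by
    rw [Polynomial.map_map, ← IsScalarTower.algebraMap_eq]
  have indep : AlgebraicIndependent S ![x i, x j] := by
    have h := (hx.adjoin_of_disjoint (s := {i, j}ᶜ) (t := {i, j}) disjoint_compl_left).comp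
      ![⟨i, by simp⟩, ⟨j, by simp⟩]
      (by simp [Function.Injective, Fin.forall_fin_two, hij, hij.symm])
    rwa [← FinVec.map_eq] at h
  have rest_mem_lifts : f.map (algebraMap R K) +
      ∑ k ∈ {i, j}ᶜ, C (x k) * (g k).map (algebraMap R K) ∈ lifts (algebraMap S K) := by
    refine add_mem ⟨_, map_map_S f⟩ (sum_mem fun k hk ↦ mul_mem ?_ ⟨_, map_map_S (g k)⟩)
    exact C_mem_lifts _ (⟨x k, Algebra.subset_adjoin ⟨k, by simpa using hk, rfl⟩⟩ : S)
  obtain ⟨p, hp⟩ := rest_mem_lifts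
  have wronskian_ne : wronskian ((g i).map (algebraMap R S)) ((g j).map (algebraMap R S)) ≠ 0 := by
    rw [wronskian_map]
    exact (Polynomial.map_ne_zero_iff algebraMap_inj).2 hgij
  have sum_eq : f.map (algebraMap R K) + ∑ k, C (x k) * (g k).map (algebraMap R K) =
      p.map (algebraMap S K) + C (x i) * ((g i).map (algebraMap R S)).map (algebraMap S K) +
        C (x j) * ((g j).map (algebraMap R S)).map (algebraMap S K) := by
    rw [map_map_S, map_map_S, ← coe_mapRingHom (algebraMap S K), hp,
      ← Finset.sum_add_sum_compl {i, j}, Finset.sum_pair hij]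
    ring
  exact sum_eq ▸ separable_add_C_mul_add_C_mul indep hg.map wronskian_ne

theorem stmt16_general {R K : Type*} [CommRing R] [Field K] [Algebra R K] {m : ℕ} (hm : 2 ≤ m)
    {A : Fin m → K} (hA : AlgebraicIndependent R A) (α : Fin m → R) (f₀ : R[X]) :
    (f₀.map (algebraMap R K) +
      ∑ i : Fin m, C (A i) * (X ^ ((i : ℕ) + 1) + C (algebraMap R K (α i)))).Separable := by
  have : Nontrivial R := (algebraMap R K).domain_nontrivial
  let zero : Fin m := ⟨0, by omega⟩
  let one : Fin m := ⟨1, by omega⟩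
  let g (i : Fin m) : R[X] := X ^ ((i : ℕ) + 1) + C (α i)
  have g_zero : g zero = X + C (α zero) := by simp only [g, zero, zero_add, pow_one]
  have hsep := separable_add_sum_C_mul hA f₀ (g := g) (i := zero) (j := one) (by simp [zero, one])
    (g_zero ▸ separable_X_add_C _) (g_zero ▸ wronskian_X_add_C_X_sq_add_C_ne_zero _ (α one))
  simpa only [g, Polynomial.map_add, Polynomial.map_pow, map_X, map_C] using hsep

/-- Let `F` be a field, `m ≥ 2`, `α_1, …, α_m ∈ F`, and `f₀ ∈ F[T]` of
degree `> m`.  Over the field `K = F(A_1, …, A_m)` of rational functions in `m`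
independent variables (realized as the fraction field of `MvPolynomial (Fin m) F`, the
variable `A_{i+1}` being `X i`), the polynomial
`𝓕(T) = f₀(T) + Σ_{i=1}^m A_i T^i + Σ_{i=1}^m A_i α_i` is separable in `T`. -/
theorem stmt16 (F : Type*) [Field F] (m : ℕ) (hm : 2 ≤ m) (α : Fin m → F)
    (f₀ : Polynomial F) (hdeg : m < f₀.natDegree) :
    (f₀.map ((algebraMap (MvPolynomial (Fin m) F)
          (FractionRing (MvPolynomial (Fin m) F))).comp MvPolynomial.C) +
      ∑ i : Fin m,
        Polynomial.C ((algebraMap (MvPolynomial (Fin m) F)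
            (FractionRing (MvPolynomial (Fin m) F))) (MvPolynomial.X i)) *
          (Polynomial.X ^ ((i : ℕ) + 1) +
            Polynomial.C ((algebraMap (MvPolynomial (Fin m) F)
              (FractionRing (MvPolynomial (Fin m) F))) (MvPolynomial.C (α i))))).Separable :=
  stmt16_general hm ((MvPolynomial.algebraicIndependent_X (Fin m) F).map'
    (f := IsScalarTower.toAlgHom F _ _) (IsFractionRing.injective _ _)) α f₀
end

section
/- Let F be an algebraically closed field, m ≥ 1, and K = F(A_0, …, A_m) the field of rational functions in m+1 variables. Let f₀(T) ∈ F[T] be monic of degree n > m and f(T) = f₀(T) + Σ_{i=0}^{m} A_i T^i ∈ K[T]. Let L be a splitting field of f over K, with f(T) = ∏_{i=1}^{n} (T − y_i) in L[T]. Let D(T) = r₁(T)/r₂(T) ∈ F(T) be a nonzero rational function in lowest terms (r₁, r₂ coprime) with deg r₂ ≥ deg r₁, and write r₂(T) = c ∏_{j=1}^{d} (T − α_j) with c ∈ F^× and α_j ∈ F. Then there exists a polynomial h ∈ F[A_0, …, A_m] such that Σ_{i=1}^{n} D(y_i) = h(A_0,…,A_m) / ∏_{j=1}^{d} f(α_j),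 and h is coprime to ∏_{j=1}^{d} f(α_j) when both are regarded as polynomials in the single variable A_0 over the field F(A_1, …, A_m). -/
noncomputable section

/-- The generic polynomial `f(T) = f₀(T) + Σ_{i=0}^m A_i T^i`, with coefficients in the
polynomial ring `F[A_0, …, A_m] = MvPolynomial (Fin (m+1)) F` (the variable `A_i` being
`MvPolynomial.X i`). -/
def genPoly (F : Type*) [Field F] (m : ℕ) (f₀ : Polynomial F) :
    Polynomial (MvPolynomial (Fin (m + 1)) F) :=
  f₀.map MvPolynomial.C +
    ∑ i : Fin (m + 1), Polynomial.C (MvPolynomial.X i) * Polynomial.X ^ (i : ℕ)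

/-- The canonical map from `F[A_0, …, A_m]` to an extension `L` of its fraction field
`K = F(A_0, …, A_m)` (realized as `FractionRing (MvPolynomial (Fin (m+1)) F)`). -/
def toExt (F : Type*) [Field F] (m : ℕ) (L : Type*) [Field L]
    [Algebra (FractionRing (MvPolynomial (Fin (m + 1)) F)) L] :
    MvPolynomial (Fin (m + 1)) F →+* L :=
  (algebraMap (FractionRing (MvPolynomial (Fin (m + 1)) F)) L).comp
    (algebraMap (MvPolynomial (Fin (m + 1)) F)
      (FractionRing (MvPolynomial (Fin (m + 1)) F)))

/-- The identification of `F[A_0, …, A_m]` with polynomials in the single variable `A_0`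
over the field `F(A_1, …, A_m)` (the fraction field of `MvPolynomial (Fin m) F`); it is
injective, and the variable `A_0 = X 0` is sent to `Polynomial.X`. -/
def toA0Poly (F : Type*) [Field F] (m : ℕ) :
    MvPolynomial (Fin (m + 1)) F →+* Polynomial (FractionRing (MvPolynomial (Fin m) F)) :=
  (Polynomial.mapRingHom (algebraMap (MvPolynomial (Fin m) F)
      (FractionRing (MvPolynomial (Fin m) F)))).comp
    (MvPolynomial.finSuccEquiv F m).toAlgHom.toRingHom

/-!
Write `A = (A_0, …, A_m)` and consider the first-order expansion in `ε` of
`Res_T(f, r₂ + ε r₁) = ∏ᵢ (r₂(yᵢ) + ε r₁(yᵢ))`.  Its constant term is `Res(f, r₂)`, which equals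
`∏ⱼ f(αⱼ)` up to a nonzero constant of `F`, and its logarithmic derivative at `ε = 0` is
`Σᵢ r₁(yᵢ) / r₂(yᵢ)`; so the coefficient of `ε`, a polynomial in `A`, is the numerator `h` up to the
same constant.

For coprimality, note that `f(αⱼ)` is linear in `A_0`, and specialize `A_0` to its root.  Then
`f = (T - αⱼ) g`, hence `Res(f, r₂ + ε r₁) = ε r₁(αⱼ) Res(g, r₂ + ε r₁)`, and `h` specializes to a
nonzero multiple of `r₁(αⱼ) Res(g, r₂)`.  This does not vanish: `r₁(αⱼ) ≠ 0` because `r₁` and `r₂`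
are coprime, and every value `g(αₖ)` of the difference quotient `g` is a polynomial in
`A_1, …, A_m` in which the coefficient of `A_1` is `1`.
-/

open Polynomial

section Resultant

variable {R S ι : Type*} [CommRing R] [CommRing S]

theorem isCoprime_X_sub_C_right_iff {K : Type*} [Field K] {p : K[X]} {a : K} :
    IsCoprime p (X - C a) ↔ p.eval a ≠ 0 := by
  rw [isCoprime_comm, (irreducible_X_sub_C a).coprime_iff_not_dvd, dvd_iff_isRoot, IsRoot.def]

theorem coeff_one_prod [DecidableEq ι] (s : Finset ι) (f : ι → R[X]) :
    (∏ i ∈ s, f i).coeff 1 = ∑ i ∈ s, (∏ k ∈ s.erase i, (f k).coeff 0) * (f i).coeff 1 := by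
  have coeff_one_eq (p : R[X]) : p.coeff 1 = p.derivative.coeff 0 := by simp [coeff_derivative]
  simp only [coeff_one_eq, derivative_prod_finset, finsetSum_coeff, mul_coeff_zero,
    coeff_zero_prod]

theorem resultant_prod_X_sub_C_left (s : Finset ι) (y : ι → R) (q : R[X]) {N : ℕ}
    (hq : q.natDegree ≤ N) :
    (∏ i ∈ s, (X - C (y i))).resultant q s.card N = ∏ i ∈ s, q.eval (y i) := by
  nontriviality R
  have h := resultant_prod_left s (fun i ↦ X - C (y i)) q N (by simp) hq
  simpa [natDegree_finsetProd_X_sub_C_eq_card, hq] using h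

theorem resultant_eq_of_monic_of_natDegree_le {f : R[X]} (hf : f.Monic) (q : R[X]) {N : ℕ}
    (hq : q.natDegree ≤ N) : f.resultant q f.natDegree N = f.resultant q := by
  obtain ⟨k, rfl⟩ := Nat.exists_eq_add_of_le hq
  simp [resultant_add_right_deg, hf]

theorem resultant_C_mul_prod_X_sub_C_right [Fintype ι] {f : R[X]} (hf : f.Monic) (c : R)
    (α : ι → R) {N : ℕ} (hN : Fintype.card ι ≤ N) :
    f.resultant (C c * ∏ j, (X - C (α j))) f.natDegree N =
      c ^ f.natDegree * (-1) ^ (f.natDegree * Fintype.card ι) * ∏ j, f.eval (α j) := by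
  nontriviality R
  have card_eq : (∏ j, (X - C (α j))).natDegree = Fintype.card ι :=
    natDegree_finsetProd_X_sub_C_eq_card _ _
  rw [resultant_C_mul_right, resultant_eq_of_monic_of_natDegree_le hf _ (card_eq.trans_le hN),
    resultant_comm, card_eq, ← Finset.card_univ, resultant_prod_X_sub_C_left _ _ _ le_rfl,
    mul_assoc]

theorem resultant_map_of_eq_C_mul_prod_X_sub_C [Fintype ι] {k : Type*} [Field k] (φ : k →+* R)
    {f : R[X]} (hf : f.Monic) {c : k} (hc : c ≠ 0) {α : ι → k} {q : k[X]}
    (hq : q = C c * ∏ j, (X - C (α j))) {N : ℕ} (hN : q.natDegree ≤ N) :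
    f.resultant (q.map φ) f.natDegree N =
      φ (c ^ f.natDegree * (-1) ^ (f.natDegree * Fintype.card ι)) * ∏ j, f.eval (φ (α j)) := by
  rw [hq, natDegree_C_mul hc, natDegree_finsetProd_X_sub_C_eq_card, Finset.card_univ] at hN
  have map_eq : q.map φ = C (φ c) * ∏ j, (X - C (φ (α j))) := by
    simp [hq, Polynomial.map_prod]
  rw [map_eq, resultant_C_mul_prod_X_sub_C_right hf _ _ hN]
  simp only [map_mul, map_pow, map_neg, map_one]

/-- The derivative of `g ↦ Res(f, g)` at `q` in the direction `p`: the coefficient of `ε` in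
`Res(f, q + ε p)`, where `ε` is the variable of the coefficient ring `R[ε]`.  As for
`Polynomial.resultant`, `n` and `N` are the formal degrees of `f` and of `p`, `q`. -/
def resultantDirDeriv (f q p : R[X]) (n N : ℕ) : R :=
  ((f.map C).resultant (q.map C + C X * p.map C) n N).coeff 1

theorem resultantDirDeriv_map (φ : R →+* S) (f q p : R[X]) (n N : ℕ) :
    resultantDirDeriv (f.map φ) (q.map φ) (p.map φ) n N = φ (resultantDirDeriv f q p n N) := by
  have map_C_map (g : R[X]) : (g.map φ).map C = (g.map C).map (mapRingHom φ) := by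
    rw [Polynomial.map_map, Polynomial.map_map, mapRingHom_comp_C]
  have map_pencil : (q.map φ).map C + C X * (p.map φ).map C =
      (q.map C + C X * p.map C).map (mapRingHom φ) := by
    simp [map_C_map]
  rw [resultantDirDeriv, map_pencil, map_C_map, resultant_map_map, coe_mapRingHom, coeff_map,
    resultantDirDeriv]

theorem natDegree_map_C_add_C_X_mul_le {q p : R[X]} {N : ℕ} (hq : q.natDegree ≤ N)
    (hp : p.natDegree ≤ N) : (q.map C + C X * p.map C : R[X][X]).natDegree ≤ N :=
  natDegree_add_le_of_degree_le (natDegree_map_le.trans hq)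
    ((natDegree_C_mul_le _ _).trans (natDegree_map_le.trans hp))

theorem eval_C_map_C_add_C_X_mul (q p : R[X]) (a : R) :
    (q.map C + C X * p.map C : R[X][X]).eval (C a) = C (q.eval a) + X * C (p.eval a) := by
  simp [eval_map, eval₂_at_apply]

theorem resultantDirDeriv_prod_X_sub_C [DecidableEq ι] (s : Finset ι) (y : ι → R) {q p : R[X]}
    {N : ℕ} (hq : q.natDegree ≤ N) (hp : p.natDegree ≤ N) :
    resultantDirDeriv (∏ i ∈ s, (X - C (y i))) q p s.card N =
      ∑ i ∈ s, (∏ k ∈ s.erase i, q.eval (y k)) * p.eval (y i) := by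
  have map_prod_eq : (∏ i ∈ s, (X - C (y i))).map C = ∏ i ∈ s, (X - C (C (y i))) := by
    simp [Polynomial.map_prod]
  rw [resultantDirDeriv, map_prod_eq,
    resultant_prod_X_sub_C_left _ _ _ (natDegree_map_C_add_C_X_mul_le hq hp), coeff_one_prod]
  simp only [eval_C_map_C_add_C_X_mul]
  simp

theorem sum_eval_div_eval {K : Type*} [Field K] (s : Finset ι) (y : ι → K) {q p : K[X]} {N : ℕ}
    (hq : q.natDegree ≤ N) (hp : p.natDegree ≤ N)
    (hres : (∏ i ∈ s, (X - C (y i))).resultant q s.card N ≠ 0) :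
    ∑ i ∈ s, p.eval (y i) / q.eval (y i) =
      resultantDirDeriv (∏ i ∈ s, (X - C (y i))) q p s.card N /
        (∏ i ∈ s, (X - C (y i))).resultant q s.card N := by
  classical
  rw [resultant_prod_X_sub_C_left _ _ _ hq] at hres ⊢
  rw [resultantDirDeriv_prod_X_sub_C _ _ hq hp, Finset.sum_div]
  refine Finset.sum_congr rfl fun i hi ↦ ?_
  rw [← Finset.prod_erase_mul _ _ hi] at hres ⊢
  rw [mul_div_mul_left _ _ (left_ne_zero_of_mul hres)]

theorem sum_eval_map_div_eval_map [Fintype ι] {K : Type*} [Field K] {φ : R →+* K}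
    (hφ : Function.Injective φ) {f q p : R[X]} {y : ι → K} (hsplit : f.map φ = ∏ i, (X - C (y i)))
    {N : ℕ} (hq : q.natDegree ≤ N) (hp : p.natDegree ≤ N)
    (hres : f.resultant q f.natDegree N ≠ 0) :
    ∑ i, (p.map φ).eval (y i) / (q.map φ).eval (y i) =
      φ (resultantDirDeriv f q p f.natDegree N) / φ (f.resultant q f.natDegree N) := by
  have natDegree_eq : f.natDegree = Finset.univ.card (α := ι) := by
    rw [← natDegree_map_eq_of_injective hφ, hsplit, natDegree_finsetProd_X_sub_C_eq_card]
  rw [← map_ne_zero_iff φ hφ] at hres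
  rw [← resultant_map_map, natDegree_eq, hsplit] at hres ⊢
  rw [← resultantDirDeriv_map, hsplit]
  exact sum_eval_div_eval _ _ (natDegree_map_le.trans hq) (natDegree_map_le.trans hp) hres

theorem coeff_zero_resultant_map_C_add_C_X_mul (f q p : R[X]) (n N : ℕ) :
    ((f.map C).resultant (q.map C + C X * p.map C) n N).coeff 0 = f.resultant q n N := by
  have map_constantCoeff_map_C (g : R[X]) : (g.map C).map constantCoeff = g := by
    ext; simp
  have map_pencil : (q.map C + C X * p.map C).map constantCoeff = q := by
    simp [map_constantCoeff_map_C]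
  rw [← constantCoeff_apply, ← resultant_map_map, map_pencil, map_constantCoeff_map_C]

theorem resultantDirDeriv_of_isRoot {f q p : R[X]} {a : R} {N : ℕ} (hf : f.Monic)
    (hfa : f.IsRoot a) (hqa : q.IsRoot a) (hq : q.natDegree ≤ N) (hp : p.natDegree ≤ N) :
    resultantDirDeriv f q p f.natDegree N =
      p.eval a * (f /ₘ (X - C a)).resultant q (f /ₘ (X - C a)).natDegree N := by
  nontriviality R
  set g := f /ₘ (X - C a)
  have f_eq : (X - C a) * g = f := mul_divByMonic_eq_iff_isRoot.mpr hfa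
  have hg : g.Monic := (monic_X_sub_C a).of_mul_monic_left (f_eq ▸ hf)
  have hdeg : f.natDegree = (X - C (C a)).natDegree + (g.map C).natDegree := by
    rw [← f_eq, (monic_X_sub_C a).natDegree_mul hg, hg.natDegree_map, natDegree_X_sub_C,
      natDegree_X_sub_C]
  have hpencil := natDegree_map_C_add_C_X_mul_le hq hp
  have map_f_eq : f.map C = (X - C (C a)) * g.map C := by simp [← f_eq]
  rw [resultantDirDeriv, hdeg, map_f_eq, resultant_mul_left _ _ _ _ hpencil, natDegree_X_sub_C,
    resultant_X_sub_C_left _ _ _ hpencil, eval_C_map_C_add_C_X_mul, hqa.eq_zero, C_0, zero_add,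
    mul_assoc, coeff_X_mul, coeff_C_mul, coeff_zero_resultant_map_C_add_C_X_mul,
    hg.natDegree_map]

theorem resultantDirDeriv_ne_zero_of_isRoot {K : Type*} [Field K] {f q p : K[X]} {a : K} {N : ℕ}
    (hf : f.Monic) (hfa : f.IsRoot a) (hqa : q.IsRoot a) (hq : q.natDegree ≤ N)
    (hp : p.natDegree ≤ N) (hpq : IsCoprime p q) (hcop : IsCoprime (f /ₘ (X - C a)) q) :
    resultantDirDeriv f q p f.natDegree N ≠ 0 := by
  have hg : (f /ₘ (X - C a)).Monic :=
    (monic_X_sub_C a).of_mul_monic_left ((mul_divByMonic_eq_iff_isRoot.mpr hfa).symm ▸ hf)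
  have hpa : p.eval a ≠ 0 :=
    isCoprime_X_sub_C_right_iff.mp (hpq.of_isCoprime_of_dvd_right (dvd_iff_isRoot.mpr hqa))
  rw [resultantDirDeriv_of_isRoot hf hfa hqa hq hp, resultant_eq_of_monic_of_natDegree_le hg _ hq]
  exact mul_ne_zero hpa (resultant_ne_zero _ _ hcop)

end Resultant

section GenPoly

variable {F : Type*} [Field F] {m : ℕ}

theorem toExt_injective (L : Type*) [Field L]
    [Algebra (FractionRing (MvPolynomial (Fin (m + 1)) F)) L] :
    Function.Injective (toExt F m L) :=
  (algebraMap (FractionRing (MvPolynomial (Fin (m + 1)) F)) L).injective.comp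
    (IsFractionRing.injective _ _)

theorem toA0Poly_C (a : F) :
    toA0Poly F m (MvPolynomial.C a) =
      C (algebraMap (MvPolynomial (Fin m) F) _ (MvPolynomial.C a)) := by
  simp [toA0Poly, MvPolynomial.finSuccEquiv_apply]

theorem toA0Poly_X_zero : toA0Poly F m (MvPolynomial.X 0) = X := by
  simp [toA0Poly, MvPolynomial.finSuccEquiv_apply]

theorem toA0Poly_X_succ (i : Fin m) :
    toA0Poly F m (MvPolynomial.X i.succ) =
      C (algebraMap (MvPolynomial (Fin m) F) _ (MvPolynomial.X i)) := by
  simp [toA0Poly, MvPolynomial.finSuccEquiv_apply]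

theorem toA0Poly_C_add_sum_X_mul_C (a : F) (b : Fin (m + 1) → F) :
    toA0Poly F m (MvPolynomial.C a + ∑ i, MvPolynomial.X i * MvPolynomial.C (b i)) =
      C (algebraMap F _ (b 0)) * X +
        C (algebraMap (MvPolynomial (Fin m) F) _
          (MvPolynomial.C a + ∑ i, MvPolynomial.X i * MvPolynomial.C (b i.succ))) := by
  rw [IsScalarTower.algebraMap_apply F (MvPolynomial (Fin m) F), MvPolynomial.algebraMap_eq]
  simp only [Fin.sum_univ_succ, map_add, map_sum, map_mul, toA0Poly_C, toA0Poly_X_zero,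
    toA0Poly_X_succ]
  ring

theorem C_add_sum_X_mul_C_ne_zero {R σ : Type*} [CommSemiring R] [Fintype σ] (a : R) {b : σ → R}
    {i : σ} (hi : b i ≠ 0) :
    MvPolynomial.C a + ∑ j, MvPolynomial.X j * MvPolynomial.C (b j) ≠ 0 := by
  classical
  intro h
  have h_pderiv := congrArg (MvPolynomial.pderiv i) h
  simp [MvPolynomial.pderiv_X, Pi.single_apply, hi] at h_pderiv

theorem exists_toA0Poly_eval_genPoly_eq (f₀ : F[X]) (β : F) :
    ∃ s, toA0Poly F m ((genPoly F m f₀).eval (MvPolynomial.C β)) = X - C s := by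
  have eval_eq : (genPoly F m f₀).eval (MvPolynomial.C β) =
      MvPolynomial.C (f₀.eval β) +
        ∑ i : Fin (m + 1), MvPolynomial.X i * MvPolynomial.C (β ^ (i : ℕ)) := by
    simp [genPoly, eval_finsetSum, eval_map, eval₂_at_apply]
  obtain ⟨t, ht⟩ : ∃ t, toA0Poly F m ((genPoly F m f₀).eval (MvPolynomial.C β)) = X + C t := by
    rw [eval_eq, toA0Poly_C_add_sum_X_mul_C, Fin.val_zero, pow_zero, map_one, C_1, one_mul]
    exact ⟨_, rfl⟩
  exact ⟨-t, by rw [ht, C_neg, sub_neg_eq_add]⟩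

theorem genPoly_divByMonic_X_sub_C (f₀ : F[X]) (α : F) :
    genPoly F m f₀ /ₘ (X - C (MvPolynomial.C α)) =
      (f₀ /ₘ (X - C α)).map MvPolynomial.C + ∑ i : Fin (m + 1), C (MvPolynomial.X i) *
        ∑ k ∈ Finset.range i, X ^ k * C (MvPolynomial.C α) ^ ((i : ℕ) - 1 - k) := by
  set a : MvPolynomial (Fin (m + 1)) F := MvPolynomial.C α
  have hf₀ : (X - C a) * (f₀ /ₘ (X - C α)).map MvPolynomial.C =
      f₀.map MvPolynomial.C - C (MvPolynomial.C (f₀.eval α)) := by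
    have h := congrArg (Polynomial.map (MvPolynomial.C (σ := Fin (m + 1))))
      (X_sub_C_mul_divByMonic_eq_sub_modByMonic f₀ α)
    simpa [modByMonic_X_sub_C_eq_C_eval] using h
  refine (div_modByMonic_unique _
    (C (MvPolynomial.C (f₀.eval α) + ∑ i : Fin (m + 1), MvPolynomial.X i * a ^ (i : ℕ)))
    (monic_X_sub_C a) ⟨?_, ?_⟩).1
  · rw [mul_add, hf₀, Finset.mul_sum]
    simp only [mul_left_comm (X - C a), mul_comm (X - C a) (∑ _ ∈ _, _), geom_sum₂_mul, genPoly]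
    simp only [mul_sub, Finset.sum_sub_distrib, map_add, map_sum, map_mul, map_pow]
    ring
  · exact degree_C_le.trans_lt (by simp)

theorem exists_toA0Poly_eval_genPoly_divByMonic_eq (hm : 1 ≤ m) (f₀ : F[X]) (α β : F) :
    ∃ v ≠ 0, toA0Poly F m
      ((genPoly F m f₀ /ₘ (X - C (MvPolynomial.C α))).eval (MvPolynomial.C β)) = C v := by
  let b (i : Fin (m + 1)) : F := ∑ k ∈ Finset.range i, β ^ k * α ^ ((i : ℕ) - 1 - k)
  have eval_eq : (genPoly F m f₀ /ₘ (X - C (MvPolynomial.C α))).eval (MvPolynomial.C β) =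
      MvPolynomial.C ((f₀ /ₘ (X - C α)).eval β) + ∑ i, MvPolynomial.X i * MvPolynomial.C (b i) := by
    simp [b, genPoly_divByMonic_X_sub_C, eval_finsetSum, eval_map, eval₂_at_apply]
  have hb₀ : b 0 = 0 := by simp [b]
  have hb₁ : b (Fin.succ ⟨0, hm⟩) ≠ 0 := by simp [b]
  have tail_ne_zero := C_add_sum_X_mul_C_ne_zero (b := fun i : Fin m ↦ b i.succ)
    ((f₀ /ₘ (X - C α)).eval β) hb₁
  rw [eval_eq, toA0Poly_C_add_sum_X_mul_C, hb₀, map_zero, C_0, zero_mul, zero_add]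
  exact ⟨_, (map_ne_zero_iff _ (IsFractionRing.injective _ _)).mpr tail_ne_zero, rfl⟩

theorem eval_genPoly_C_ne_zero (f₀ : F[X]) (β : F) :
    (genPoly F m f₀).eval (MvPolynomial.C β) ≠ 0 := by
  obtain ⟨s, hs⟩ := exists_toA0Poly_eval_genPoly_eq (m := m) f₀ β
  exact fun h ↦ X_sub_C_ne_zero s (by rw [← hs, h, map_zero])

/-- The specialization `A_0 ↦ s`, as a map from `F[A_0, …, A_m]` to the field `F(A_1, …, A_m)`. -/
def specializeA0 (s : FractionRing (MvPolynomial (Fin m) F)) :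
    MvPolynomial (Fin (m + 1)) F →+* FractionRing (MvPolynomial (Fin m) F) :=
  (evalRingHom s).comp (toA0Poly F m)

theorem isCoprime_map_genPoly_divByMonic {ι : Type*} [Fintype ι] (hm : 1 ≤ m) (f₀ : F[X])
    (s : FractionRing (MvPolynomial (Fin m) F)) {c : F} (hc : c ≠ 0) (α : ι → F) (β : F) :
    IsCoprime
      ((genPoly F m f₀).map (specializeA0 s) /ₘ (X - C (specializeA0 s (MvPolynomial.C β))))
      (((C c * ∏ j, (X - C (α j))).map MvPolynomial.C).map (specializeA0 s)) := by
  have hunit : IsUnit (C (specializeA0 s (MvPolynomial.C c))) :=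
    isUnit_C.mpr (((isUnit_iff_ne_zero.mpr hc).map MvPolynomial.C).map (specializeA0 s))
  have map_X_sub_C : (X - C (MvPolynomial.C β)).map (specializeA0 s) =
      X - C (specializeA0 s (MvPolynomial.C β)) := by simp
  rw [← map_X_sub_C, ← map_divByMonic _ (monic_X_sub_C _)]
  simp only [Polynomial.map_mul, Polynomial.map_prod, Polynomial.map_sub, map_X, map_C]
  rw [isCoprime_mul_unit_left_right hunit]
  refine IsCoprime.prod_right fun k _ ↦ isCoprime_X_sub_C_right_iff.mpr ?_
  obtain ⟨v, hv, hquot_eval⟩ := exists_toA0Poly_eval_genPoly_divByMonic_eq hm f₀ β (α k)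
  rw [eval_map, eval₂_at_apply]
  simpa [specializeA0, hquot_eval] using hv

theorem isCoprime_toA0Poly_resultantDirDeriv {ι : Type*} [Fintype ι] (hm : 1 ≤ m) {f₀ : F[X]}
    (hf : (genPoly F m f₀).Monic) {r₁ r₂ : F[X]} (hred : IsCoprime r₁ r₂) {c : F} (hc : c ≠ 0)
    {α : ι → F} (hr₂ : r₂ = C c * ∏ j, (X - C (α j))) {N : ℕ} (hN₁ : r₁.natDegree ≤ N)
    (hN₂ : r₂.natDegree ≤ N) (j : ι) :
    IsCoprime
      (toA0Poly F m (resultantDirDeriv (genPoly F m f₀) (r₂.map MvPolynomial.C)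
        (r₁.map MvPolynomial.C) (genPoly F m f₀).natDegree N))
      (toA0Poly F m ((genPoly F m f₀).eval (MvPolynomial.C (α j)))) := by
  obtain ⟨s, hs⟩ := exists_toA0Poly_eval_genPoly_eq (m := m) f₀ (α j)
  have hfα : ((genPoly F m f₀).map (specializeA0 s)).IsRoot
      (specializeA0 s (MvPolynomial.C (α j))) := by
    rw [IsRoot, eval_map, eval₂_at_apply]
    simp [specializeA0, hs]
  have hr₂α : r₂.IsRoot (α j) := by
    simp [hr₂, eval_prod, Finset.prod_eq_zero (Finset.mem_univ j)]
  rw [hs, isCoprime_X_sub_C_right_iff]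
  change specializeA0 s _ ≠ 0
  rw [← resultantDirDeriv_map, ← hf.natDegree_map (specializeA0 s)]
  exact resultantDirDeriv_ne_zero_of_isRoot (hf.map _) hfα hr₂α.map.map
    (natDegree_map_le.trans (natDegree_map_le.trans hN₂))
    (natDegree_map_le.trans (natDegree_map_le.trans hN₁))
    ((hred.map (mapRingHom MvPolynomial.C)).map (mapRingHom (specializeA0 s)))
    (hr₂ ▸ isCoprime_map_genPoly_divByMonic hm f₀ s hc α (α j))

end GenPoly

theorem stmt17_general {F : Type*} [Field F] {m : ℕ} (hm : 1 ≤ m) (f₀ : F[X])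
    (L : Type*) [Field L] [Algebra (FractionRing (MvPolynomial (Fin (m + 1)) F)) L]
    {ι κ : Type*} [Fintype ι] [Fintype κ] (y : ι → L)
    (hsplit : (genPoly F m f₀).map (toExt F m L) = ∏ i, (X - C (y i)))
    (r₁ r₂ : F[X]) (hred : IsCoprime r₁ r₂) (c : F) (hc : c ≠ 0) (α : κ → F)
    (hr₂ : r₂ = C c * ∏ j, (X - C (α j))) :
    ∃ h : MvPolynomial (Fin (m + 1)) F,
      ∑ i, (r₁.map ((toExt F m L).comp MvPolynomial.C)).eval (y i) /
          (r₂.map ((toExt F m L).comp MvPolynomial.C)).eval (y i) =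
        toExt F m L h / toExt F m L (∏ j, (genPoly F m f₀).eval (MvPolynomial.C (α j))) ∧
      IsCoprime (toA0Poly F m h)
        (toA0Poly F m (∏ j, (genPoly F m f₀).eval (MvPolynomial.C (α j)))) := by
  let f := genPoly F m f₀
  let N := max r₁.natDegree r₂.natDegree
  have hN₁ : r₁.natDegree ≤ N := le_max_left _ _
  have hN₂ : r₂.natDegree ≤ N := le_max_right _ _
  let H := resultantDirDeriv f (r₂.map MvPolynomial.C) (r₁.map MvPolynomial.C) f.natDegree N
  have hf : f.Monic := monic_of_injective (toExt_injective L) (hsplit ▸ monic_prod_X_sub_C y _)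
  obtain ⟨u, hu, hres⟩ : ∃ u : F, IsUnit u ∧ f.resultant (r₂.map MvPolynomial.C) f.natDegree N =
      MvPolynomial.C u * ∏ j, f.eval (MvPolynomial.C (α j)) :=
    ⟨_, isUnit_iff_ne_zero.mpr (by simp [hc]),
      resultant_map_of_eq_C_mul_prod_X_sub_C _ hf hc hr₂ hN₂⟩
  have hres_ne : f.resultant (r₂.map MvPolynomial.C) f.natDegree N ≠ 0 := by
    rw [hres]
    exact mul_ne_zero (hu.map MvPolynomial.C).ne_zero
      (Finset.prod_ne_zero_iff.mpr fun j _ ↦ eval_genPoly_C_ne_zero f₀ (α j))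
  refine ⟨MvPolynomial.C u⁻¹ * H, ?_, ?_⟩
  · have map_C_inv : toExt F m L (MvPolynomial.C u⁻¹) = (toExt F m L (MvPolynomial.C u))⁻¹ :=
      map_inv₀ ((toExt F m L).comp MvPolynomial.C) u
    simp only [← Polynomial.map_map]
    rw [sum_eval_map_div_eval_map (toExt_injective L) hsplit (natDegree_map_le.trans hN₂)
      (natDegree_map_le.trans hN₁) hres_ne, hres, map_mul, map_mul, map_C_inv, inv_mul_eq_div,
      div_div]
  · rw [map_mul, map_prod, isCoprime_mul_unit_left_left ((hu.inv.map MvPolynomial.C).map _)]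
    exact IsCoprime.prod_right fun j _ ↦ isCoprime_toA0Poly_resultantDirDeriv hm hf hred hc hr₂
      hN₁ hN₂ j

/-- Let `F` be an algebraically closed field, `m ≥ 1`,
`K = F(A_0, …, A_m)`, `f₀ ∈ F[T]` monic of degree `n > m`, and
`f = f₀ + Σ_{i=0}^m A_i T^i ∈ K[T]`.  Let `L` be a splitting field of `f` over `K`, with
`f = ∏_{i=1}^n (T − y_i)` in `L[T]`.  Let `D = r₁/r₂ ∈ F(T)` be a nonzero rational
function in lowest terms with `deg r₂ ≥ deg r₁` and `r₂ = c ∏_{j=1}^d (T − α_j)`.  Then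
there is `h ∈ F[A_0, …, A_m]` with `Σ_{i=1}^n D(y_i) = h / ∏_{j=1}^d f(α_j)` and `h`
coprime to `∏_{j=1}^d f(α_j)` as polynomials in the single variable `A_0` over the field
`F(A_1, …, A_m)`. -/
theorem stmt17 (F : Type*) [Field F] [IsAlgClosed F] (m : ℕ) (hm : 1 ≤ m)
    (n : ℕ) (hmn : m < n)
    (f₀ : Polynomial F) (hmonic : f₀.Monic) (hdeg : f₀.natDegree = n)
    (L : Type*) [Field L]
    [Algebra (FractionRing (MvPolynomial (Fin (m + 1)) F)) L]
    (y : Fin n → L)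
    (hsplit : (genPoly F m f₀).map (toExt F m L) =
      ∏ i : Fin n, (Polynomial.X - Polynomial.C (y i)))
    (r₁ r₂ : Polynomial F) (hr₁ : r₁ ≠ 0) (hred : IsCoprime r₁ r₂)
    (hdegle : r₁.degree ≤ r₂.degree)
    (c : F) (hc : c ≠ 0) (d : ℕ) (α : Fin d → F)
    (hr₂ : r₂ = Polynomial.C c * ∏ j : Fin d, (Polynomial.X - Polynomial.C (α j))) :
    ∃ h : MvPolynomial (Fin (m + 1)) F,
      (∑ i : Fin n,
          Polynomial.eval (y i) (r₁.map ((toExt F m L).comp MvPolynomial.C)) /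
            Polynomial.eval (y i) (r₂.map ((toExt F m L).comp MvPolynomial.C))) =
        toExt F m L h /
          toExt F m L (∏ j : Fin d, Polynomial.eval (MvPolynomial.C (α j)) (genPoly F m f₀)) ∧
      IsCoprime (toA0Poly F m h)
        (toA0Poly F m
          (∏ j : Fin d, Polynomial.eval (MvPolynomial.C (α j)) (genPoly F m f₀))) :=
  stmt17_general hm f₀ L y hsplit r₁ r₂ hred c hc α hr₂

end
end
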